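/- arXiv:1502.02070 — 2 statements merged into one kernel-verified Lean document; each statement's English description precedes it below -/
import Mathlib

section
/- For every d ≥ 3 there exists a finite family of closed balls in EuclideanSpace ℝ (Fin d) with positive radii and pairwise disjoint interiors (dist(c_i,c_j) ≥ r_i + r_j for i ≠ j) whose tangency graph has chromatic number at least d + 3. -/
/-- The tangency graph of a family of balls with centers `c` and radii `r`:
two indices are adjacent iff they are distinct and the corresponding balls are
tangent. -/
def tangencyGraph {d n : ℕ} (c : Fin n → EuclideanSpace ℝ (Fin d)) (r : Fin n → ℝ) :
    SimpleGraph (Fin n) where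
  Adj i j := i ≠ j ∧ dist (c i) (c j) = r i + r j
  symm := by
    constructor
    rintro i j ⟨hij, h⟩
    exact ⟨hij.symm, by rwa [dist_comm, add_comm]⟩
  loopless := by
    constructor
    rintro i ⟨h, -⟩
    exact h rfl


/-- Prepend a coordinate to a Euclidean vector. -/
noncomputable def extVec {k : ℕ} (z : ℝ) (v : EuclideanSpace ℝ (Fin k)) :
    EuclideanSpace ℝ (Fin (k + 1)) :=
  WithLp.toLp 2 (Fin.cons z v.ofLp)

lemma dist_extVec {k : ℕ} (z z' : ℝ) (v v' : EuclideanSpace ℝ (Fin k)) :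
    dist (extVec z v) (extVec z' v') ^ 2 = (z - z') ^ 2 + dist v v' ^ 2 := by
  rw [EuclideanSpace.dist_eq, EuclideanSpace.dist_eq, Real.sq_sqrt (by positivity),
    Real.sq_sqrt (by positivity), Fin.sum_univ_succ]
  simp [extVec, Real.dist_eq, sq_abs]

lemma norm_extVec {k : ℕ} (z : ℝ) (v : EuclideanSpace ℝ (Fin k)) :
    ‖extVec z v‖ ^ 2 = z ^ 2 + ‖v‖ ^ 2 := by
  rw [EuclideanSpace.norm_eq, EuclideanSpace.norm_eq, Real.sq_sqrt (by positivity),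
    Real.sq_sqrt (by positivity), Fin.sum_univ_succ]
  simp [extVec, sq_abs]

lemma exists_extVec {k : ℕ} (q : EuclideanSpace ℝ (Fin (k + 1))) :
    ∃ z v, q = extVec z v := by
  refine ⟨q 0, WithLp.toLp 2 (Fin.tail q.ofLp), ?_⟩
  ext i
  refine Fin.cases ?_ (fun j => ?_) i <;> simp [extVec, Fin.tail]

/-- Regular simplices of edge length 2, centred at the origin. -/
lemma exists_simplex (k : ℕ) :
    ∃ q : Fin (k + 1) → EuclideanSpace ℝ (Fin k),
      (∀ i, ‖q i‖ ^ 2 = 2 * k / (k + 1)) ∧ ∀ i j, i ≠ j → dist (q i) (q j) ^ 2 = 4 := by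
  induction k with
  | zero =>
    refine ⟨fun _ => 0, by simp, fun i j h => absurd (Subsingleton.elim (α := Fin 1) i j) h⟩
  | succ k ih =>
    obtain ⟨q, hq, hd⟩ := ih
    obtain ⟨b, hb⟩ : ∃ b : ℝ, b ^ 2 = 2 * (k + 1) / (k + 2) :=
      ⟨√(2 * (k + 1) / (k + 2)), Real.sq_sqrt (by positivity)⟩
    have h1 : (k : ℝ) + 1 ≠ 0 := by positivity
    have h2 : (k : ℝ) + 2 ≠ 0 := by positivity
    have e1 : (-(b / (k + 1))) ^ 2 = 2 / ((k + 1) * (k + 2)) := by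
      rw [neg_sq, div_pow, hb]; field_simp
    have e2 : (b - -(b / (k + 1))) ^ 2 = 2 * (k + 2) / (k + 1) := by
      have : b - -(b / (k + 1)) = b * ((k + 2) / (k + 1)) := by field_simp; ring
      rw [this, mul_pow, hb]; field_simp
    refine ⟨Fin.cons (extVec b 0) fun i => extVec (-(b / (k + 1))) (q i), ?_, ?_⟩
    · intro i
      refine Fin.cases ?_ (fun j => ?_) i
      · simp only [Fin.cons_zero, norm_extVec, hb, norm_zero]; push_cast
        field_simp; ring
      · simp only [Fin.cons_succ, norm_extVec, e1, hq]; push_cast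
        field_simp; ring
    · have key : ∀ j, dist (extVec b 0) (extVec (-(b / (k + 1))) (q j)) ^ 2 = 4 := by
        intro j
        rw [dist_extVec, e2, dist_zero_left, hq]; field_simp; ring
      intro i j
      refine Fin.cases ?_ (fun i => ?_) i <;> refine Fin.cases ?_ (fun j => ?_) j
      · intro h; exact absurd rfl h
      · intro _; simpa only [Fin.cons_zero, Fin.cons_succ] using key j
      · intro _
        simp only [Fin.cons_zero, Fin.cons_succ]
        rw [dist_comm]; exact key i
      · intro h
        simp only [Fin.cons_succ]
        rw [dist_extVec, hd i j (fun e => h (by rw [e]))]; ring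

lemma exists_angle (s : ℝ) (hs1 : 1 ≤ s) (hs2 : s ^ 2 ≤ 3) :
    ∃ a : ℝ, 0 < a ∧ 33 * a ≤ 2 * Real.pi ∧ s * Real.sin (16 * a) = Real.sin a := by
  have hpi := Real.pi_pos
  have hcont : ContinuousOn (fun a : ℝ => s * Real.sin (16 * a) - Real.sin a)
      (Set.Icc (Real.pi / 17) (2 * Real.pi / 33)) := by fun_prop
  have hle : Real.pi / 17 ≤ 2 * Real.pi / 33 := by linarith
  have h := intermediate_value_Icc' hle hcont
  have h0 : (0 : ℝ) ∈ Set.Icc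
      ((fun a : ℝ => s * Real.sin (16 * a) - Real.sin a) (2 * Real.pi / 33))
      ((fun a : ℝ => s * Real.sin (16 * a) - Real.sin a) (Real.pi / 17)) := by
    constructor
    · have e : 16 * (2 * Real.pi / 33) = Real.pi - Real.pi / 33 := by ring
      have e' : 2 * Real.pi / 33 = 2 * (Real.pi / 33) := by ring
      simp only [e, Real.sin_pi_sub]
      rw [e', Real.sin_two_mul]
      have hsin : 0 ≤ Real.sin (Real.pi / 33) :=
        Real.sin_nonneg_of_nonneg_of_le_pi (by positivity) (by linarith)
      have hcos : √3 / 2 ≤ Real.cos (Real.pi / 33) := by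
        rw [← Real.cos_pi_div_six]
        exact Real.cos_le_cos_of_nonneg_of_le_pi (by positivity) (by linarith) (by linarith)
      have : s ≤ √3 := Real.le_sqrt_of_sq_le hs2
      nlinarith
    · have e : 16 * (Real.pi / 17) = Real.pi - Real.pi / 17 := by ring
      simp only [e, Real.sin_pi_sub]
      have hsin : 0 ≤ Real.sin (Real.pi / 17) :=
        Real.sin_nonneg_of_nonneg_of_le_pi (by positivity) (by linarith)
      nlinarith
  obtain ⟨a, ha, hfa⟩ := h h0
  refine ⟨a, lt_of_lt_of_le (by positivity) ha.1, ?_, ?_⟩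
  · have := ha.2; linarith
  · have : s * Real.sin (16 * a) - Real.sin a = 0 := hfa
    linarith

lemma sin_sq_le (a x : ℝ) (ha : 0 < a) (ha2 : 33 * a ≤ 2 * Real.pi)
    (h2 : 2 ≤ |x|) (h31 : |x| ≤ 31) :
    Real.sin a ^ 2 ≤ Real.sin (x * a / 2) ^ 2 := by
  have e : Real.sin (x * a / 2) ^ 2 = Real.sin (|x| * a / 2) ^ 2 := by
    rcases abs_cases x with ⟨h, _⟩ | ⟨h, _⟩
    · rw [h]
    · rw [h, show -x * a / 2 = -(x * a / 2) by ring, Real.sin_neg, neg_sq]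
  rw [e]
  have hpi := Real.pi_pos
  have hs : 0 ≤ Real.sin a := Real.sin_nonneg_of_nonneg_of_le_pi ha.le (by linarith)
  have hy : a ≤ |x| * a / 2 := by nlinarith
  have hy2 : |x| * a / 2 ≤ Real.pi - a := by nlinarith
  refine pow_le_pow_left₀ hs ?_ 2
  rcases le_total (|x| * a / 2) (Real.pi / 2) with h | h
  · exact Real.sin_le_sin_of_le_of_le_pi_div_two (by linarith) h hy
  · rw [← Real.sin_pi_sub (|x| * a / 2)]
    exact Real.sin_le_sin_of_le_of_le_pi_div_two (by linarith) (by linarith) (by linarith)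

lemma polar_dist (A B α β : ℝ) :
    (A * Real.cos α - B * Real.cos β) ^ 2 + (A * Real.sin α - B * Real.sin β) ^ 2
      = (A - B) ^ 2 + 4 * A * B * Real.sin ((α - β) / 2) ^ 2 := by
  have h : Real.cos (α - β) = 1 - 2 * Real.sin ((α - β) / 2) ^ 2 := by
    have := Real.cos_two_mul' ((α - β) / 2)
    have h2 := Real.sin_sq_add_cos_sq ((α - β) / 2)
    rw [show 2 * ((α - β) / 2) = α - β by ring] at this
    linarith
  rw [Real.cos_sub] at h
  have h1 := Real.sin_sq_add_cos_sq α
  have h2 := Real.sin_sq_add_cos_sq β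
  linear_combination A ^ 2 * h1 + B ^ 2 * h2 - 2 * A * B * h

lemma polar_dist_ge (A B α β σ S : ℝ) (hσ : 0 ≤ σ) (hS : 0 ≤ S) (hσS : 1 ≤ σ * S)
    (hA : σ ≤ A) (hB : σ ≤ B) (h : S ^ 2 ≤ Real.sin ((α - β) / 2) ^ 2) :
    4 ≤ (A * Real.cos α - B * Real.cos β) ^ 2 + (A * Real.sin α - B * Real.sin β) ^ 2 := by
  rw [polar_dist]
  have h1 : σ * σ ≤ A * B := mul_le_mul hA hB hσ (hσ.trans hA)
  have h2 : (σ * σ) * S ^ 2 ≤ (A * B) * Real.sin ((α - β) / 2) ^ 2 :=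
    mul_le_mul h1 h (by positivity) ((mul_nonneg hσ hσ).trans h1)
  nlinarith [sq_nonneg (A - B)]

/-- Index type of the unit ball packing: spine vertices and simplex vertices. -/
abbrev SpineIdx (m : ℕ) : Type := Fin 17 ⊕ (Fin 16 × Fin (m + 2))

/-- A packing of unit balls in dimension `m + 2`, outside the unit ball at the origin,
arranged in a ring of bipyramids. -/
lemma exists_unit_packing (m : ℕ) :
    ∃ X : SpineIdx m → EuclideanSpace ℝ (Fin (m + 2)),
      (∀ v, 1 < ‖X v‖ ^ 2) ∧
      (∀ v w, v ≠ w → 4 ≤ dist (X v) (X w) ^ 2) ∧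
      (∀ l i j, i ≠ j → dist (X (.inr (l, i))) (X (.inr (l, j))) ^ 2 = 4) ∧
      (∀ (l : Fin 16) i, dist (X (.inl l.castSucc)) (X (.inr (l, i))) ^ 2 = 4) ∧
      (∀ (l : Fin 16) i, dist (X (.inl l.succ)) (X (.inr (l, i))) ^ 2 = 4) ∧
      dist (X (.inl 0)) (X (.inl (Fin.last 16))) ^ 2 = 4 := by
  obtain ⟨q, hq, hqd⟩ := exists_simplex (m + 1)
  choose t w htw using fun i => exists_extVec (q i)
  obtain ⟨s, hs0, hs⟩ : ∃ s : ℝ, 0 ≤ s ∧ s ^ 2 = 2 * (m + 3) / (m + 2) :=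
    ⟨√(2 * (m + 3) / (m + 2)), Real.sqrt_nonneg _, Real.sq_sqrt (by positivity)⟩
  have hm : (0 : ℝ) ≤ m := by positivity
  have hs2 : 2 ≤ s ^ 2 := by rw [hs, le_div_iff₀ (by positivity)]; linarith
  have hs3 : s ^ 2 ≤ 3 := by rw [hs, div_le_iff₀ (by positivity)]; linarith
  have hs1 : 1.414 ≤ s := by nlinarith
  have htw2 : ∀ i, t i ^ 2 + ‖w i‖ ^ 2 = 4 - s ^ 2 := by
    intro i
    rw [← norm_extVec, ← htw, hq, hs]; push_cast; field_simp; ring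
  have htwd : ∀ i j, i ≠ j → (t i - t j) ^ 2 + dist (w i) (w j) ^ 2 = 4 := by
    intro i j h
    rw [← dist_extVec, ← htw, ← htw, hqd i j h]
  have ht : ∀ i, -1.415 ≤ t i := by
    intro i
    have := htw2 i
    nlinarith [sq_nonneg ‖w i‖]
  obtain ⟨a, ha, ha2, hsa⟩ := exists_angle s (by linarith) hs3
  have hpi := Real.pi_lt_d2
  have hpi0 := Real.pi_pos
  have ha3 : a ≤ 0.191 := by linarith
  have hsin : 0 < Real.sin a := Real.sin_pos_of_pos_of_lt_pi ha (by linarith)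
  have hsin2 : Real.sin a ≤ 0.191 := (Real.sin_le ha.le).trans ha3
  have hcos : 0.981 ≤ Real.cos a := by
    have := Real.one_sub_sq_div_two_le_cos (x := a)
    nlinarith
  obtain ⟨R, hR⟩ : ∃ R, R = s / Real.sin a := ⟨_, rfl⟩
  have hRs : R * Real.sin a = s := by rw [hR]; field_simp
  have hRN : R * Real.sin (16 * a) = 1 := by
    have : (R * Real.sin (16 * a) - 1) * Real.sin a = 0 := by
      linear_combination hsa + Real.sin (16 * a) * hRs
    have := (mul_eq_zero.mp this).resolve_right hsin.ne'
    linarith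
  have hR0 : 0 < R := by rw [hR]; positivity
  obtain ⟨σ, hσ⟩ : ∃ σ, σ = R * Real.cos a - 1.415 := ⟨_, rfl⟩
  have hσS : 1 ≤ σ * Real.sin a := by
    have : σ * Real.sin a = s * Real.cos a - 1.415 * Real.sin a := by
      rw [hσ, ← hRs]; ring
    rw [this]; nlinarith
  have hσ1 : 1 < σ := by
    by_contra hcon
    push Not at hcon
    nlinarith
  have hRσ : σ ≤ R := by
    have := Real.cos_le_one a
    nlinarith
  have hQσ : ∀ i, σ ≤ R * Real.cos a + t i := fun i => by
    have := ht i; linarith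
  let P : ℝ → ℝ → EuclideanSpace ℝ (Fin m) → EuclideanSpace ℝ (Fin (m + 2)) :=
    fun A α w => extVec (A * Real.cos α) (extVec (A * Real.sin α) w)
  have hPn : ∀ A α w, ‖P A α w‖ ^ 2 = A ^ 2 + ‖w‖ ^ 2 := by
    intro A α w
    simp only [P, norm_extVec]
    linear_combination A ^ 2 * Real.sin_sq_add_cos_sq α
  have hPd : ∀ A α w B β w', dist (P A α w) (P B β w') ^ 2 =
      ((A * Real.cos α - B * Real.cos β) ^ 2 + (A * Real.sin α - B * Real.sin β) ^ 2)
        + dist w w' ^ 2 := by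
    intro A α w B β w'
    simp only [P, dist_extVec]; ring
  have hge : ∀ A α w B β w' x, σ ≤ A → σ ≤ B → α - β = x * a → 2 ≤ |x| → |x| ≤ 31 →
      4 ≤ dist (P A α w) (P B β w') ^ 2 := by
    intro A α w B β w' x hA hB hx h2 h31
    rw [hPd]
    have := polar_dist_ge A B α β σ (Real.sin a) (by linarith) hsin.le hσS hA hB
      (by rw [hx]; exact sin_sq_le a x ha ha2 h2 h31)
    nlinarith [sq_nonneg (dist w w')]
  have hadj : ∀ (α β : ℝ) i, (α - β = a ∨ α - β = -a) →
      dist (P R α 0) (P (R * Real.cos a + t i) β (w i)) ^ 2 = 4 := by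
    intro α β i h
    have hc : Real.cos (α - β) = Real.cos a := by
      rcases h with h | h <;> rw [h]
      exact Real.cos_neg a
    rw [Real.cos_sub] at hc
    rw [hPd, dist_zero_left]
    have h1 := Real.sin_sq_add_cos_sq α
    have h2 := Real.sin_sq_add_cos_sq β
    have h3 := Real.sin_sq_add_cos_sq a
    have h4 := htw2 i
    have h5 : R ^ 2 * Real.sin a ^ 2 = s ^ 2 := by rw [← hRs]; ring
    linear_combination R ^ 2 * h1 + (R * Real.cos a + t i) ^ 2 * h2
      - 2 * R * (R * Real.cos a + t i) * hc + h4 + h5 - R ^ 2 * h3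
  have hlast : dist (P R (2 * ((0 : Fin 17) : ℕ) * a) 0)
      (P R (2 * ((Fin.last 16 : Fin 17) : ℕ) * a) 0) ^ 2 = 4 := by
    rw [hPd, polar_dist, dist_self]
    have e : (2 * (((0 : Fin 17) : ℕ) : ℝ) * a - 2 * (((Fin.last 16 : Fin 17) : ℕ) : ℝ) * a) / 2
        = -(16 * a) := by
      simp; ring
    rw [e, Real.sin_neg]
    linear_combination 4 * (R * Real.sin (16 * a) + 1) * hRN
  have hUU : ∀ k k' : Fin 17, k < k' →
      4 ≤ dist (P R (2 * (k : ℕ) * a) 0) (P R (2 * (k' : ℕ) * a) 0) ^ 2 := by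
    intro k k' hkk
    by_cases hc : (k : ℕ) = 0 ∧ (k' : ℕ) = 16
    · have h1 : k = 0 := Fin.ext hc.1
      have h2 : k' = Fin.last 16 := Fin.ext hc.2
      rw [h1, h2, hlast]
    · refine hge _ _ _ _ _ _ (2 * ((k : ℕ) : ℝ) - 2 * ((k' : ℕ) : ℝ)) hRσ hRσ (by ring) ?_ ?_
      · rw [abs_sub_comm]
        refine le_trans ?_ (le_abs_self _)
        have : ((k : ℕ) : ℝ) + 1 ≤ ((k' : ℕ) : ℝ) := by exact_mod_cast hkk
        linarith
      · have h3 : (k' : ℕ) ≤ (k : ℕ) + 15 := by omega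
        have h3' : ((k' : ℕ) : ℝ) ≤ ((k : ℕ) : ℝ) + 15 := by exact_mod_cast h3
        have : ((k : ℕ) : ℝ) ≤ ((k' : ℕ) : ℝ) := by exact_mod_cast hkk.le
        rw [abs_le]; constructor <;> linarith
  have hUQ : ∀ (k : Fin 17) (l : Fin 16) i,
      4 ≤ dist (P R (2 * (k : ℕ) * a) 0)
        (P (R * Real.cos a + t i) ((2 * (l : ℕ) + 1) * a) (w i)) ^ 2 := by
    intro k l i
    by_cases h1 : (k : ℕ) = l
    · exact (hadj _ _ i (Or.inr (by rw [h1]; ring))).ge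
    by_cases h2 : (k : ℕ) = l + 1
    · exact (hadj _ _ i (Or.inl (by rw [h2]; push_cast; ring))).ge
    have hk : ((k : ℕ) : ℝ) ≤ 16 := by exact_mod_cast (by omega : (k : ℕ) ≤ 16)
    have hl : ((l : ℕ) : ℝ) ≤ 15 := by exact_mod_cast (by omega : (l : ℕ) ≤ 15)
    have hk0 : (0 : ℝ) ≤ ((k : ℕ) : ℝ) := by positivity
    have hl0 : (0 : ℝ) ≤ ((l : ℕ) : ℝ) := by positivity
    refine hge _ _ _ _ _ _ (2 * ((k : ℕ) : ℝ) - (2 * ((l : ℕ) : ℝ) + 1)) hRσ (hQσ i)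
      (by ring) ?_ ?_
    · rw [le_abs]
      rcases (by omega : (k : ℕ) + 1 ≤ l ∨ (l : ℕ) + 2 ≤ k) with h | h
      · right
        have : ((k : ℕ) : ℝ) + 1 ≤ ((l : ℕ) : ℝ) := by exact_mod_cast h
        linarith
      · left
        have : ((l : ℕ) : ℝ) + 2 ≤ ((k : ℕ) : ℝ) := by exact_mod_cast h
        linarith
    · rw [abs_le]; constructor <;> linarith
  have hQQ : ∀ (l : Fin 16) i j, i ≠ j →
      dist (P (R * Real.cos a + t i) ((2 * (l : ℕ) + 1) * a) (w i))
        (P (R * Real.cos a + t j) ((2 * (l : ℕ) + 1) * a) (w j)) ^ 2 = 4 := by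
    intro l i j h
    rw [hPd, polar_dist, sub_self, zero_div, Real.sin_zero]
    linear_combination htwd i j h
  have hQQ' : ∀ (l l' : Fin 16) i j, l ≠ l' →
      4 ≤ dist (P (R * Real.cos a + t i) ((2 * (l : ℕ) + 1) * a) (w i))
        (P (R * Real.cos a + t j) ((2 * (l' : ℕ) + 1) * a) (w j)) ^ 2 := by
    intro l l' i j hll
    have hll' : (l : ℕ) ≠ l' := fun h => hll (Fin.ext h)
    have hk : ((l' : ℕ) : ℝ) ≤ 15 := by exact_mod_cast (by omega : (l' : ℕ) ≤ 15)
    have hl : ((l : ℕ) : ℝ) ≤ 15 := by exact_mod_cast (by omega : (l : ℕ) ≤ 15)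
    have hk0 : (0 : ℝ) ≤ ((l' : ℕ) : ℝ) := by positivity
    have hl0 : (0 : ℝ) ≤ ((l : ℕ) : ℝ) := by positivity
    refine hge _ _ _ _ _ _ (2 * ((l : ℕ) : ℝ) - 2 * ((l' : ℕ) : ℝ)) (hQσ i) (hQσ j)
      (by ring) ?_ ?_
    · rw [le_abs]
      rcases (by omega : (l : ℕ) + 1 ≤ l' ∨ (l' : ℕ) + 1 ≤ l) with h | h
      · right
        have : ((l : ℕ) : ℝ) + 1 ≤ ((l' : ℕ) : ℝ) := by exact_mod_cast h
        linarith
      · left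
        have : ((l' : ℕ) : ℝ) + 1 ≤ ((l : ℕ) : ℝ) := by exact_mod_cast h
        linarith
    · rw [abs_le]; constructor <;> linarith
  refine ⟨Sum.elim (fun k => P R (2 * (k : ℕ) * a) 0)
    (fun p => P (R * Real.cos a + t p.2) ((2 * (p.1 : ℕ) + 1) * a) (w p.2)),
    ?_, ?_, ?_, ?_, ?_, ?_⟩
  · rintro (k | ⟨l, i⟩)
    · simp only [Sum.elim_inl, hPn, norm_zero]
      nlinarith
    · simp only [Sum.elim_inr, hPn]
      have := hQσ i
      nlinarith [sq_nonneg ‖w i‖]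
  · rintro (k | ⟨l, i⟩) (k' | ⟨l', i'⟩) hne
    · simp only [Sum.elim_inl]
      have hk : k ≠ k' := fun h => hne (by rw [h])
      rcases lt_or_gt_of_ne hk with h | h
      · exact hUU k k' h
      · rw [dist_comm]; exact hUU k' k h
    · simp only [Sum.elim_inl, Sum.elim_inr]
      exact hUQ k l' i'
    · simp only [Sum.elim_inl, Sum.elim_inr]
      rw [dist_comm]; exact hUQ k' l i
    · simp only [Sum.elim_inr]
      by_cases hl : l = l'
      · subst hl
        exact (hQQ l i i' (fun h => hne (by rw [h]))).ge
      · exact hQQ' l l' i i' hl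
  · intro l i j h
    simp only [Sum.elim_inr]
    exact hQQ l i j h
  · intro l i
    simp only [Sum.elim_inl, Sum.elim_inr]
    exact hadj _ _ i (Or.inr (by rw [Fin.val_castSucc]; ring))
  · intro l i
    simp only [Sum.elim_inl, Sum.elim_inr]
    exact hadj _ _ i (Or.inl (by rw [Fin.val_succ]; push_cast; ring))
  · simp only [Sum.elim_inl]
    exact hlast

/-- The ring of bipyramids joined with two further vertices is not `(m + 5)`-colorable. -/
lemma no_coloring (m : ℕ) (C : Bool ⊕ SpineIdx m → Fin (m + 5))
    (hB : C (.inl true) ≠ C (.inl false))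
    (hBV : ∀ b v, C (.inl b) ≠ C (.inr v))
    (hQ : ∀ l i j, i ≠ j → C (.inr (.inr (l, i))) ≠ C (.inr (.inr (l, j))))
    (h0 : ∀ (l : Fin 16) i, C (.inr (.inl l.castSucc)) ≠ C (.inr (.inr (l, i))))
    (h1 : ∀ (l : Fin 16) i, C (.inr (.inl l.succ)) ≠ C (.inr (.inr (l, i))))
    (hl : C (.inr (.inl 0)) ≠ C (.inr (.inl (Fin.last 16)))) : False := by
  have step : ∀ l : Fin 16, C (.inr (.inl l.castSucc)) = C (.inr (.inl l.succ)) := by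
    intro l
    by_contra hne
    let f : (Bool ⊕ Bool) ⊕ Fin (m + 2) → Fin (m + 5) :=
      Sum.elim (Sum.elim (fun b => C (.inl b))
        (fun b => if b then C (.inr (.inl l.castSucc)) else C (.inr (.inl l.succ))))
        (fun i => C (.inr (.inr (l, i))))
    have hf : Function.Injective f := by
      rintro ((b | b) | i) ((b' | b') | j) h
      · cases b <;> cases b' <;> simp_all [f]
      · cases b' <;> exact absurd h (hBV _ _)
      · exact absurd h (hBV _ _)
      · cases b <;> exact absurd h.symm (hBV _ _)
      · cases b <;> cases b' <;> simp_all [f]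
      · cases b
        · exact absurd h (h1 _ _)
        · exact absurd h (h0 _ _)
      · exact absurd h.symm (hBV _ _)
      · cases b'
        · exact absurd h.symm (h1 _ _)
        · exact absurd h.symm (h0 _ _)
      · by_contra hij
        exact hQ l i j (fun e => hij (by rw [e])) h
    have := Fintype.card_le_of_injective f hf
    simp at this
    omega
  have all : ∀ k : Fin 17, C (.inr (.inl 0)) = C (.inr (.inl k)) := by
    intro k
    induction k using Fin.induction with
    | zero => rfl
    | succ l ih => rw [ih, step]
  exact hl (all _)

lemma inversion_dist {E : Type*} [NormedAddCommGroup E] [InnerProductSpace ℝ E] (x y : E)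
    (p q : ℝ) (hp : p = ‖x‖ ^ 2 - 1) (hq : q = ‖y‖ ^ 2 - 1) (hp0 : 0 < p) (hq0 : 0 < q) :
    dist (p⁻¹ • x) (q⁻¹ • y) ^ 2 = (p⁻¹ + q⁻¹) ^ 2 + (dist x y ^ 2 - 4) / (p * q) := by
  rw [dist_eq_norm, dist_eq_norm, @norm_sub_sq_real, @norm_sub_sq_real, norm_smul, norm_smul,
    inner_smul_left, inner_smul_right, mul_pow, mul_pow, Real.norm_eq_abs, Real.norm_eq_abs,
    sq_abs, sq_abs, show ‖x‖ ^ 2 = p + 1 by linarith, show ‖y‖ ^ 2 = q + 1 by linarith]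
  simp only [conj_trivial]
  field_simp
  ring

/-- Transfer from an arbitrary finite index type to `Fin n`. -/
lemma transfer {V : Type} [Fintype V] {d : ℕ} (c : V → EuclideanSpace ℝ (Fin d)) (r : V → ℝ)
    (hr : ∀ i, 0 < r i) (hp : ∀ i j, i ≠ j → r i + r j ≤ dist (c i) (c j))
    (hC : ∀ C : V → Fin (d + 2),
      (∀ i j, i ≠ j → dist (c i) (c j) = r i + r j → C i ≠ C j) → False) :
    ∃ (n : ℕ) (c : Fin n → EuclideanSpace ℝ (Fin d)) (r : Fin n → ℝ),
      (∀ i, 0 < r i) ∧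
      (∀ i j, i ≠ j → r i + r j ≤ dist (c i) (c j)) ∧
      ((d + 3 : ℕ) : ℕ∞) ≤ (tangencyGraph c r).chromaticNumber := by
  let e := Fintype.equivFin V
  refine ⟨Fintype.card V, c ∘ e.symm, r ∘ e.symm, fun i => hr _,
    fun i j h => hp _ _ (fun h' => h (e.symm.injective h')), ?_⟩
  by_contra hlt
  push Not at hlt
  have hle : (tangencyGraph (c ∘ e.symm) (r ∘ e.symm)).chromaticNumber ≤ ((d + 2 : ℕ) : ℕ∞) := by
    have : ((d + 3 : ℕ) : ℕ∞) = ((d + 2 : ℕ) : ℕ∞) + 1 := by push_cast; ring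
    rw [this] at hlt
    exact Order.le_of_lt_add_one hlt
  obtain ⟨C⟩ := SimpleGraph.chromaticNumber_le_iff_colorable.mp hle
  refine hC (fun v => C (e v)) fun i j hij hd => ?_
  exact C.valid ⟨fun h => hij (e.injective h), by simpa using hd⟩

/-- For every `d ≥ 3` there is a ball packing in dimension `d` whose tangency
graph has chromatic number at least `d + 3`. -/
theorem exists_ball_packing_chromatic_ge (d : ℕ) (hd : 3 ≤ d) :
    ∃ (n : ℕ) (c : Fin n → EuclideanSpace ℝ (Fin d)) (r : Fin n → ℝ),
      (∀ i, 0 < r i) ∧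
      (∀ i j, i ≠ j → r i + r j ≤ dist (c i) (c j)) ∧
      ((d + 3 : ℕ) : ℕ∞) ≤ (tangencyGraph c r).chromaticNumber := by
  obtain ⟨m, rfl⟩ := Nat.exists_eq_add_of_le' hd
  obtain ⟨X, hX1, hXd, hQ, h0, h1, hl⟩ := exists_unit_packing m
  let p : SpineIdx m → ℝ := fun v => ‖X v‖ ^ 2 - 1
  have hp0 : ∀ v, 0 < p v := fun v => by have := hX1 v; simp only [p]; linarith
  let c : Bool ⊕ SpineIdx m → EuclideanSpace ℝ (Fin (m + 3)) :=
    Sum.elim (fun b => extVec (if b then 1 / 2 else -(1 / 2)) 0)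
      (fun v => extVec 0 ((p v)⁻¹ • X v))
  let r : Bool ⊕ SpineIdx m → ℝ := Sum.elim (fun _ => 1 / 2) (fun v => (p v)⁻¹)
  have hr : ∀ i, 0 < r i := by
    rintro (b | v)
    · simp [r]
    · exact inv_pos.mpr (hp0 v)
  have hrr : ∀ i j, 0 ≤ r i + r j := fun i j => (add_pos (hr i) (hr j)).le
  have heq : ∀ i j, dist (c i) (c j) ^ 2 = (r i + r j) ^ 2 → dist (c i) (c j) = r i + r j :=
    fun i j h => (pow_left_inj₀ dist_nonneg (hrr i j) two_ne_zero).mp h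
  have hge : ∀ i j, (r i + r j) ^ 2 ≤ dist (c i) (c j) ^ 2 → r i + r j ≤ dist (c i) (c j) :=
    fun i j h => (pow_le_pow_iff_left₀ (hrr i j) dist_nonneg two_ne_zero).mp h
  have hVV : ∀ v w, dist (c (.inr v)) (c (.inr w)) ^ 2
      = (r (.inr v) + r (.inr w)) ^ 2 + (dist (X v) (X w) ^ 2 - 4) / (p v * p w) := by
    intro v w
    simp only [c, r, Sum.elim_inr, dist_extVec]
    rw [inversion_dist (X v) (X w) (p v) (p w) rfl rfl (hp0 v) (hp0 w)]
    ring
  have hVVadj : ∀ v w, dist (X v) (X w) ^ 2 = 4 →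
      dist (c (.inr v)) (c (.inr w)) = r (.inr v) + r (.inr w) := by
    intro v w h
    apply heq
    rw [hVV, h]; ring
  have hBV : ∀ b v, dist (c (.inl b)) (c (.inr v)) = r (.inl b) + r (.inr v) := by
    intro b v
    apply heq
    have hn : ‖X v‖ ^ 2 = p v + 1 := by simp only [p]; ring
    have hpv := (hp0 v).ne'
    simp only [c, r, Sum.elim_inr, Sum.elim_inl, dist_extVec, dist_zero_left, norm_smul,
      mul_pow, hn, Real.norm_eq_abs, sq_abs]
    cases b <;> simp <;> field_simp <;> ring
  have hBB : dist (c (.inl true)) (c (.inl false)) = r (.inl true) + r (.inl false) := by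
    apply heq
    simp only [c, r, Sum.elim_inl, dist_extVec, dist_self]
    norm_num
  refine transfer c r hr ?_ ?_
  · rintro (b | v) (b' | w) hne
    · cases b <;> cases b'
      · exact absurd rfl hne
      · rw [dist_comm, add_comm]; exact hBB.ge
      · exact hBB.ge
      · exact absurd rfl hne
    · exact (hBV b w).ge
    · rw [dist_comm, add_comm]; exact (hBV b' v).ge
    · apply hge
      rw [hVV]
      have h4 := hXd v w (fun h => hne (by rw [h]))
      have : 0 ≤ (dist (X v) (X w) ^ 2 - 4) / (p v * p w) :=
        div_nonneg (by linarith) (mul_pos (hp0 v) (hp0 w)).le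
      linarith
  · intro C hC
    have hVC : ∀ v w, v ≠ w → dist (X v) (X w) ^ 2 = 4 → C (.inr v) ≠ C (.inr w) :=
      fun v w hne h => hC _ _ (fun e => hne (Sum.inr_injective e)) (hVVadj v w h)
    refine no_coloring m C (hC _ _ (by simp) hBB)
      (fun b v => hC _ _ (by simp) (hBV b v)) (fun l i j h => hVC _ _ ?_ (hQ l i j h))
      (fun l i => hVC _ _ (by simp) (h0 l i)) (fun l i => hVC _ _ (by simp) (h1 l i))
      (hVC _ _ ?_ hl)
    · simpa using h
    · intro h
      exact absurd (Sum.inl_injective h) (by decide)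
end

section
/- There exists a set of 16 points in EuclideanSpace ℝ (Fin 5) with pairwise distances at least 1 whose unit-distance graph (joining two points exactly when their distance equals 1) is isomorphic to the halved 5-cube graph (vertices: the even-weight vectors of (ZMod 2)^5, edges: pairs differing in exactly two coordinates) and has chromatic number 8. -/
/-- The unit-distance graph on a set of points in Euclidean space:
two points are adjacent exactly when their distance equals `1`. -/
def unitDistanceGraph {d : ℕ} (P : Set (EuclideanSpace ℝ (Fin d))) :
    SimpleGraph P where
  Adj x y := dist (x : EuclideanSpace ℝ (Fin d)) (y : EuclideanSpace ℝ (Fin d)) = 1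
  symm := by
    constructor
    intro x y h
    rwa [dist_comm]
  loopless := by
    constructor
    intro x h
    rw [dist_self] at h
    norm_num at h

/-- The halved 5-cube graph (the Clebsch graph): vertices are the even-weight
vectors of `(ZMod 2)^5`, two vertices being adjacent exactly when they differ
in exactly two coordinates. -/
def halvedCube5 :
    SimpleGraph {x : Fin 5 → ZMod 2 // Even (Finset.univ.filter fun i => x i ≠ 0).card} where
  Adj x y := (Finset.univ.filter fun i => x.1 i ≠ y.1 i).card = 2
  symm := by
    constructor
    intro x y h
    have e : (Finset.univ.filter fun i => y.1 i ≠ x.1 i)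
        = Finset.univ.filter fun i => x.1 i ≠ y.1 i :=
      Finset.filter_congr fun i _ => ne_comm
    rw [e]
    exact h
  loopless := by
    constructor
    intro x h
    simp at h

abbrev EvenVec := {x : Fin 5 → ZMod 2 // Even (Finset.univ.filter fun i => x i ≠ 0).card}

instance : DecidableRel halvedCube5.Adj := fun x y =>
  inferInstanceAs (Decidable ((Finset.univ.filter fun i => x.1 i ≠ y.1 i).card = 2))

theorem evenVec_card : Fintype.card EvenVec = 16 := by decide +kernel

/-- Distinct even vectors differ in at least two coordinates. -/
theorem evenVec_two_le : ∀ x y : EvenVec, x ≠ y →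
    2 ≤ (Finset.univ.filter fun i => x.1 i ≠ y.1 i).card := by decide +kernel

/-- Independent sets of the halved 5-cube have at most two elements. -/
theorem halvedCube5_no_three : ∀ x y z : EvenVec, x ≠ y → x ≠ z → y ≠ z →
    halvedCube5.Adj x y ∨ halvedCube5.Adj x z ∨ halvedCube5.Adj y z := by decide +kernel

/-- The colouring whose classes are the pairs `{x, x + 11110}`. -/
def cubeColor (x : EvenVec) : ZMod 2 × ZMod 2 × ZMod 2 :=
  (x.1 4, x.1 0 + x.1 1, x.1 0 + x.1 2)

theorem cubeColor_valid : ∀ x y : EvenVec, halvedCube5.Adj x y → cubeColor x ≠ cubeColor y := by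
  decide +kernel

theorem halvedCube5_chromaticNumber : halvedCube5.chromaticNumber = 8 := by
  apply le_antisymm
  · have C : halvedCube5.Coloring (ZMod 2 × ZMod 2 × ZMod 2) :=
      SimpleGraph.Coloring.mk cubeColor (fun {x y} h => cubeColor_valid x y h)
    have h := C.colorable
    have h8 : Fintype.card (ZMod 2 × ZMod 2 × ZMod 2) = 8 := by decide
    rw [h8] at h
    exact_mod_cast h.chromaticNumber_le
  · by_contra hlt
    rw [not_le] at hlt
    have hc : halvedCube5.Colorable 7 := by
      rw [← SimpleGraph.chromaticNumber_le_iff_colorable]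
      have h8 : (8 : ℕ∞) = ((7 : ℕ) : ℕ∞) + 1 := by norm_num
      rw [h8] at hlt
      exact Order.le_of_lt_add_one hlt
    obtain ⟨C⟩ := hc
    obtain ⟨c, -, hcard⟩ := Finset.exists_lt_card_fiber_of_mul_lt_card_of_maps_to
      (s := (Finset.univ : Finset EvenVec)) (t := (Finset.univ : Finset (Fin 7)))
      (f := fun x => C x) (n := 2) (fun _ _ => Finset.mem_univ _)
      (by rw [Finset.card_univ, Finset.card_univ, evenVec_card]; simp)
    obtain ⟨x, y, z, hx, hy, hz, hxy, hxz, hyz⟩ := Finset.two_lt_card_iff.mp hcard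
    simp only [Finset.mem_filter, Finset.mem_univ, true_and] at hx hy hz
    rcases halvedCube5_no_three x y z hxy hxz hyz with h | h | h
    · exact C.valid h (hx.trans hy.symm)
    · exact C.valid h (hx.trans hz.symm)
    · exact C.valid h (hy.trans hz.symm)

/-- The embedding of the even vectors as vertices of a cube of side `√2 / 2`. -/
noncomputable def cubePoint (x : EvenVec) : EuclideanSpace ℝ (Fin 5) :=
  WithLp.toLp 2 fun i => if x.1 i = 0 then 0 else √2 / 2

theorem cubePoint_dist_sq (x y : EvenVec) : dist (cubePoint x) (cubePoint y) ^ 2 =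
    ((Finset.univ.filter fun i => x.1 i ≠ y.1 i).card : ℝ) / 2 := by
  have hs : (√2 : ℝ) ^ 2 = 2 := Real.sq_sqrt (by norm_num)
  have h2 : ∀ a b : ZMod 2, a ≠ 0 → b ≠ 0 → a = b := by decide
  rw [EuclideanSpace.dist_sq_eq, Finset.card_filter, Nat.cast_sum, Finset.sum_div]
  refine Finset.sum_congr rfl fun i _ => ?_
  rw [Real.dist_eq, sq_abs]
  simp only [cubePoint]
  by_cases hx : x.1 i = 0 <;> by_cases hy : y.1 i = 0
  · simp [hx, hy]
  · have : (0 : ZMod 2) ≠ y.1 i := fun h => hy h.symm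
    simp [hx, hy, this, div_pow]; norm_num
  · simp [hx, hy, div_pow]; norm_num
  · simp [h2 _ _ hx hy]

theorem cubePoint_one_le {x y : EvenVec} (h : x ≠ y) :
    1 ≤ dist (cubePoint x) (cubePoint y) := by
  have h1 := cubePoint_dist_sq x y
  have h2 : (2 : ℝ) ≤ ((Finset.univ.filter fun i => x.1 i ≠ y.1 i).card : ℝ) := by
    exact_mod_cast evenVec_two_le x y h
  nlinarith [dist_nonneg (x := cubePoint x) (y := cubePoint y)]

theorem cubePoint_injective : Function.Injective cubePoint := by
  intro x y h
  by_contra hne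
  have := cubePoint_one_le hne
  rw [h, dist_self] at this
  norm_num at this

theorem cubePoint_dist_eq_one (x y : EvenVec) :
    dist (cubePoint x) (cubePoint y) = 1 ↔ halvedCube5.Adj x y := by
  have h1 := cubePoint_dist_sq x y
  change _ ↔ (Finset.univ.filter fun i => x.1 i ≠ y.1 i).card = 2
  constructor
  · intro h
    rw [h] at h1
    have : ((Finset.univ.filter fun i => x.1 i ≠ y.1 i).card : ℝ) = 2 := by linarith
    exact_mod_cast this
  · intro h
    rw [h] at h1
    nlinarith [dist_nonneg (x := cubePoint x) (y := cubePoint y)]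

/-- There are 16 points in `EuclideanSpace ℝ (Fin 5)` with pairwise distances
at least `1` whose unit-distance graph is isomorphic to the halved 5-cube
graph and has chromatic number `8`. -/
theorem exists_halved_cube_unit_ball_packing :
    ∃ P : Finset (EuclideanSpace ℝ (Fin 5)),
      P.card = 16 ∧
      (∀ x ∈ P, ∀ y ∈ P, x ≠ y → 1 ≤ dist x y) ∧
      Nonempty ((unitDistanceGraph (P : Set (EuclideanSpace ℝ (Fin 5)))) ≃g halvedCube5) ∧
      (unitDistanceGraph (P : Set (EuclideanSpace ℝ (Fin 5)))).chromaticNumber = 8 := by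
  have e : unitDistanceGraph
      ((Finset.univ.map ⟨cubePoint, cubePoint_injective⟩ : Finset _) :
        Set (EuclideanSpace ℝ (Fin 5))) ≃g halvedCube5 := by
    refine SimpleGraph.Iso.symm ⟨Equiv.ofBijective
      (fun x => ⟨cubePoint x, by simp⟩) ⟨?_, ?_⟩, ?_⟩
    · intro x y h
      exact cubePoint_injective (congrArg Subtype.val h)
    · rintro ⟨p, hp⟩
      simp only [Finset.coe_map, Function.Embedding.coeFn_mk, Finset.coe_univ, Set.image_univ,
        Set.mem_range] at hp
      obtain ⟨x, rfl⟩ := hp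
      exact ⟨x, rfl⟩
    · intro x y
      exact cubePoint_dist_eq_one x y
  refine ⟨Finset.univ.map ⟨cubePoint, cubePoint_injective⟩, ?_, ?_, ⟨e⟩, ?_⟩
  · rw [Finset.card_map, Finset.card_univ, evenVec_card]
  · intro p hp q hq hne
    simp only [Finset.mem_map, Finset.mem_univ, true_and, Function.Embedding.coeFn_mk] at hp hq
    obtain ⟨x, rfl⟩ := hp
    obtain ⟨y, rfl⟩ := hq
    exact cubePoint_one_le fun h => hne (by rw [h])
  · rw [← halvedCube5_chromaticNumber]
    exact le_antisymm (SimpleGraph.chromaticNumber_mono_of_hom e.toHom)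
      (SimpleGraph.chromaticNumber_mono_of_hom e.symm.toHom)
end
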